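/- arXiv:2203.06009 — 5 statements merged into one kernel-verified Lean document; each statement's English description precedes it below -/
import Mathlib

section
/- Let L be an imaginary quadratic field, q an odd rational prime, 𝔮 a prime ideal of 𝒪_L lying above q, and f a nonnegative integer such that the ideal 𝔮^f is fixed by complex conjugation on L. If 𝔮^f is principal, generated by α ∈ 𝒪_L, then α^12 = N(𝔮)^{6f}. -/
/-!
Write `σ` for complex conjugation on `L` and `n = N(𝔮)^f`, so that `α * σ α = N(α) = n`
(norms from an imaginary quadratic field are nonnegative). Since `𝔮 ^ f` is fixed by `σ`,
there is a unit `u` with `σ α = u * α`; hence `u * α ^ 2 = n`, and everything reduces to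
`u ^ 6 = 1`.

Applying `σ` twice gives `u * σ u = 1`, so `u` has absolute value `1` and its trace
`t = u + σ u` is an integer with `|t| ≤ 2`; moreover `u ^ 2 - t * u + 1 = 0`. If `t ≠ 0`, then
`u` is a sixth root of unity. If `t = 0`, then `u ^ 2 = -1`, and the algebraic integer
`s = α * (1 + u)` is fixed by `σ`, hence a rational integer, with `s ^ 2 = 2 * u * α ^ 2 = 2 * n`.
This is impossible because `n` is odd, being the power of a divisor of `N(q) = q ^ 2`.
-/

open NumberField

section

variable {L : Type*} [Field L] [NumberField L]

/-- An imaginary quadratic field is Galois over `ℚ` with group `{1, σ}`, where `σ` is induced by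
complex conjugation through any complex embedding. -/
lemma exists_isConj_of_imaginary_quadratic (hdeg : Module.finrank ℚ L = 2)
    (himag : ∀ φ : L →+* ℂ, ¬ ComplexEmbedding.IsReal φ) :
    IsGalois ℚ L ∧ ∃ (φ : L →+* ℂ) (σ : L ≃ₐ[ℚ] L), ComplexEmbedding.IsConj φ σ ∧ σ ≠ 1 ∧
      ∀ τ : L ≃ₐ[ℚ] L, τ = 1 ∨ τ = σ := by
  have : Algebra.IsQuadraticExtension ℚ L := ⟨hdeg⟩
  have hG : IsGalois ℚ L := inferInstance
  obtain ⟨φ⟩ : Nonempty (L →+* ℂ) := inferInstance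
  obtain ⟨σ, hσ⟩ := ComplexEmbedding.exists_comp_symm_eq_of_comp_eq (k := ℚ) φ
    (ComplexEmbedding.conjugate φ) (Subsingleton.elim _ _)
  have hc : ComplexEmbedding.IsConj φ σ.symm := hσ.symm
  have hne : σ.symm ≠ 1 := (ComplexEmbedding.isConj_ne_one_iff hc).2 (himag φ)
  refine ⟨hG, φ, σ.symm, hc, hne, fun τ => ?_⟩
  have hcard : Nat.card (L ≃ₐ[ℚ] L) = 2 := (IsGalois.card_aut_eq_finrank ℚ L).trans hdeg
  obtain ⟨y, -, hy⟩ := (Nat.card_eq_two_iff' (1 : L ≃ₐ[ℚ] L)).1 hcard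
  by_cases h : τ = 1
  · exact Or.inl h
  · exact Or.inr ((hy τ h).trans (hy _ hne).symm)

lemma exists_int_of_fixed [IsGalois ℚ L] {σ : L ≃ₐ[ℚ] L} (hall : ∀ τ : L ≃ₐ[ℚ] L, τ = 1 ∨ τ = σ)
    {x : L} (hx : IsIntegral ℤ x) (hfix : σ x = x) : ∃ m : ℤ, (m : L) = x := by
  have hbot : x ∈ (⊥ : IntermediateField ℚ L) := by
    rw [IsGalois.mem_bot_iff_fixed]
    intro τ
    rcases hall τ with rfl | rfl
    · rfl
    · exact hfix
  obtain ⟨r, rfl⟩ := IntermediateField.mem_bot.1 hbot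
  rw [isIntegral_algebraMap_iff (algebraMap ℚ L).injective] at hx
  obtain ⟨m, rfl⟩ := IsIntegrallyClosed.isIntegral_iff.1 hx
  exact ⟨m, by simp⟩

/-- A norm from an imaginary quadratic field is nonnegative, so the product of `x` and its
conjugate is the absolute norm of the ideal generated by `x`. -/
lemma mul_conj_eq_absNorm [IsGalois ℚ L] {φ : L →+* ℂ} {σ : L ≃ₐ[ℚ] L}
    (hc : ComplexEmbedding.IsConj φ σ) (hne : σ ≠ 1) (hall : ∀ τ : L ≃ₐ[ℚ] L, τ = 1 ∨ τ = σ)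
    (x : 𝓞 L) : (x : L) * σ x = (Ideal.absNorm (Ideal.span {x}) : L) := by
  classical
  have huniv : (Finset.univ : Finset (L ≃ₐ[ℚ] L)) = {1, σ} := by
    ext τ
    simpa using hall τ
  have hprod : ((Algebra.norm ℤ x : ℤ) : L) = (x : L) * σ x := by
    have h := Algebra.norm_eq_prod_automorphisms ℚ (x : L)
    rw [huniv, Finset.prod_pair hne.symm, ← Algebra.coe_norm_int] at h
    simpa using h
  have hnn : 0 ≤ Algebra.norm ℤ x := by
    have h := congrArg φ hprod
    rw [map_mul, hc.eq, map_intCast, Complex.star_def, Complex.mul_conj] at h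
    have h' : ((Algebra.norm ℤ x : ℤ) : ℝ) = Complex.normSq (φ x) := by exact_mod_cast h
    exact_mod_cast h' ▸ Complex.normSq_nonneg (φ x)
  rw [Ideal.absNorm_span_singleton, ← hprod, ← Int.cast_natCast (R := L), Int.natAbs_of_nonneg hnn]

/-- The unit by which `α` differs from its conjugate is a sixth root of unity when the norm of `α`
is odd. -/
lemma pow_six_eq_one_of_conj_eq_mul [IsGalois ℚ L] {φ : L →+* ℂ} {σ : L ≃ₐ[ℚ] L}
    (hc : ComplexEmbedding.IsConj φ σ) (hall : ∀ τ : L ≃ₐ[ℚ] L, τ = 1 ∨ τ = σ)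
    {a u : L} (ha : IsIntegral ℤ a) (hu : IsIntegral ℤ u) (hau : σ a = u * a) {n : ℕ}
    (hn : Odd n) (han : a * σ a = n) : u ^ 6 = 1 := by
  have hn0 : (n : L) ≠ 0 := by exact_mod_cast hn.pos.ne'
  have ha0 : a ≠ 0 := by
    rintro rfl
    simp at han
    exact hn0 han.symm
  have hσσ (x : L) : σ (σ x) = x := ComplexEmbedding.isConj_apply_apply hc x
  have huu : u * σ u = 1 := by
    have h := hσσ a
    rw [hau, map_mul, hau] at h
    exact mul_right_cancel₀ ha0 (by linear_combination h)
  have hσu : IsIntegral ℤ (σ u) := map_isIntegral_int σ hu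
  obtain ⟨t, ht⟩ := exists_int_of_fixed hall (hu.add hσu) (by rw [map_add, hσσ, add_comm])
  have htle : |t| ≤ 2 := by
    have h1 : ‖φ u‖ = 1 := by
      have h := congrArg (fun x => ‖φ x‖) huu
      simp only [map_mul, hc.eq, norm_mul, norm_star, map_one, norm_one] at h
      nlinarith [norm_nonneg (φ u)]
    have h2 : (t : ℂ) = φ u + star (φ u) := by
      rw [← hc.eq, ← map_add, ← ht, map_intCast]
    have h3 : ‖(t : ℂ)‖ ≤ 2 := by
      rw [h2]
      refine (norm_add_le _ _).trans ?_
      rw [norm_star, h1]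
      norm_num
    rw [Complex.norm_intCast] at h3
    exact_mod_cast h3
  have hquad : u ^ 2 - t * u + 1 = 0 := by
    rw [ht]
    linear_combination -huu
  obtain ⟨hlo, hhi⟩ := abs_le.1 htle
  interval_cases t
  · have h : u = -1 := by
      have : (u + 1) ^ 2 = 0 := by push_cast at hquad; linear_combination hquad
      exact eq_neg_of_add_eq_zero_left (pow_eq_zero_iff two_ne_zero |>.1 this)
    rw [h]
    norm_num
  · push_cast at hquad
    linear_combination (u - 1) * (u ^ 3 + 1) * hquad
  · -- Here `u ^ 2 = -1`, and `s = a * (1 + u)` is a rational integer with square `2 * n`.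
    exfalso
    have hsfix : σ (a * (1 + u)) = a * (1 + u) := by
      rw [map_mul, map_add, map_one, hau]
      linear_combination a * huu
    obtain ⟨m, hm⟩ := exists_int_of_fixed hall (ha.mul (isIntegral_one.add hu)) hsfix
    have hmn : ((m ^ 2 : ℤ) : L) = ((2 * n : ℤ) : L) := by
      push_cast at hquad ⊢
      rw [hm, ← han, hau]
      linear_combination a ^ 2 * hquad
    have hmn' : m ^ 2 = 2 * (n : ℤ) := by exact_mod_cast hmn
    obtain ⟨k, rfl⟩ := hn
    obtain ⟨j, rfl⟩ : Even m := by
      have : Even (m ^ 2) := hmn' ▸ even_two_mul _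
      exact (Int.even_pow.1 this).1
    push_cast at hmn'
    ring_nf at hmn'
    omega
  · push_cast at hquad
    linear_combination (u + 1) * (u ^ 3 - 1) * hquad
  · have h : u = 1 := by
      have : (u - 1) ^ 2 = 0 := by push_cast at hquad; linear_combination hquad
      exact sub_eq_zero.1 (pow_eq_zero_iff two_ne_zero |>.1 this)
    rw [h]
    norm_num

lemma odd_absNorm_of_odd_prime_mem {q : ℕ} (hq : q.Prime) (hq_odd : q ≠ 2) {I : Ideal (𝓞 L)}
    (hI : (q : 𝓞 L) ∈ I) : Odd (Ideal.absNorm I) := by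
  have hdvd := Ideal.absNorm_dvd_absNorm_of_le ((Ideal.span_singleton_le_iff_mem I).2 hI)
  rw [Ideal.absNorm_span_natCast] at hdvd
  exact ((hq.odd_of_ne_two hq_odd).pow).of_dvd_nat hdvd

end

/-- Let `L` be an imaginary quadratic field, `q` an odd rational prime, `𝔮` a prime ideal
of `𝒪_L` lying above `q`, and `f` a nonnegative integer such that the ideal `𝔮^f` is fixed
by complex conjugation on `L` (equivalently, by every `ℚ`-automorphism of `L`).  If `𝔮^f`
is principal, generated by `α ∈ 𝒪_L`, then `α^12 = N(𝔮)^(6f)`. -/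
theorem ideal_generators_of_conj_invariant_odd
    (L : Type*) [Field L] [NumberField L]
    (hdeg : Module.finrank ℚ L = 2)
    (himag : ∀ φ : L →+* ℂ, ¬ NumberField.ComplexEmbedding.IsReal φ)
    (q : ℕ) (hq : q.Prime) (hq_odd : q ≠ 2)
    (𝔮 : Ideal (𝓞 L)) (h𝔮prime : 𝔮.IsPrime) (h𝔮ne : 𝔮 ≠ ⊥)
    (h𝔮q : (q : 𝓞 L) ∈ 𝔮)
    (f : ℕ)
    (hconj : ∀ σ : L ≃ₐ[ℚ] L,
      Ideal.map (RingOfIntegers.mapRingHom σ) (𝔮 ^ f) = 𝔮 ^ f)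
    (α : 𝓞 L) (hα : Ideal.span {α} = 𝔮 ^ f) :
    α ^ 12 = (Ideal.absNorm 𝔮 : 𝓞 L) ^ (6 * f) := by
  obtain ⟨hG, φ, σ, hc, hne, hall⟩ := exists_isConj_of_imaginary_quadratic hdeg himag
  have hnorm := mul_conj_eq_absNorm hc hne hall α
  rw [hα, map_pow] at hnorm
  have hodd : Odd (Ideal.absNorm 𝔮 ^ f) := (odd_absNorm_of_odd_prime_mem hq hq_odd h𝔮q).pow
  have hspan := hconj σ
  rw [← hα, Ideal.map_span, Set.image_singleton,
    Ideal.span_singleton_eq_span_singleton] at hspan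
  obtain ⟨u, hu⟩ := hspan.symm
  have hau : σ (α : L) = ((u : 𝓞 L) : L) * α := by
    have h := congrArg (algebraMap (𝓞 L) L) hu
    rw [map_mul] at h
    rw [mul_comm]
    exact h.symm
  have hu6 := pow_six_eq_one_of_conj_eq_mul hc hall (RingOfIntegers.isIntegral_coe α)
    (RingOfIntegers.isIntegral_coe (u : 𝓞 L)) hau hodd hnorm
  rw [hau] at hnorm
  push_cast at hnorm
  apply RingOfIntegers.coe_injective
  have h6 := congrArg (· ^ 6) hnorm
  simp only [map_pow, map_natCast]
  rw [mul_comm 6 f, pow_mul (Ideal.absNorm 𝔮 : L), ← h6]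
  linear_combination -(α : L) ^ 12 * hu6
end

section
/- Let q be a rational prime, f ≥ 1 an integer, and t an integer with gcd(t, q) = 1 and t² ≤ 4q^f, so that x² + t x + q^f is the characteristic polynomial of Frobenius of an ordinary elliptic curve over 𝔽_{q^f}. If β ∈ ℂ is a root of x² + t x + q^f, then for every integer n ≥ 1 the power β^n is not a rational number. -/
/-!
Write `γ = -t - β` for the second root, so that `β γ = q ^ f`. The condition `t² ≤ 4 q ^ f` says
that the discriminant is nonpositive, hence `γ` is the complex conjugate of `β`. If `β ^ n` is
rational it is fixed by conjugation, so `β ^ n = γ ^ n`, and the integer `s = β ^ n + γ ^ n`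
satisfies `s² = 4 β ^ n γ ^ n = 4 q ^ (f n)`; in particular `q ∣ s`. On the other hand the
recurrence `s_{n+2} = -t s_{n+1} - q ^ f s_n` gives `s ≡ (-t) ^ n` modulo `q` for `n ≥ 1`,
so `q ∣ t`, contradicting ordinarity.
-/

/-- The power sums of the two roots of `x² + t x + Q` are integers and, in positive degree,
congruent to powers of `-t` modulo any divisor `q` of `Q`. Two consecutive power sums are carried
along because they satisfy a recurrence of order two. -/
theorem exists_int_powerSum (t Q q : ℤ) (hqQ : q ∣ Q) (β γ : ℂ)
    (hs : β + γ = -(t : ℂ)) (hp : β * γ = (Q : ℂ)) (n : ℕ) :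
    ∃ a b : ℤ, β ^ (n + 1) + γ ^ (n + 1) = (a : ℂ) ∧ β ^ (n + 2) + γ ^ (n + 2) = (b : ℂ) ∧
      q ∣ a - (-t) ^ (n + 1) ∧ q ∣ b - (-t) ^ (n + 2) := by
  induction n with
  | zero =>
    refine ⟨-t, t ^ 2 - 2 * Q, ?_, ?_, by simp, ?_⟩
    · push_cast
      linear_combination hs
    · push_cast
      linear_combination (β + γ - t) * hs - 2 * hp
    · obtain ⟨k, rfl⟩ := hqQ
      exact ⟨-2 * k, by ring⟩
  | succ n ih =>
    obtain ⟨a, b, ha, hb, -, hb'⟩ := ih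
    refine ⟨b, -t * b - Q * a, hb, ?_, hb', ?_⟩
    · push_cast
      rw [← ha, ← hb]
      linear_combination (β ^ (n + 2) + γ ^ (n + 2)) * hs - (β ^ (n + 1) + γ ^ (n + 1)) * hp
    · obtain ⟨k, rfl⟩ := hqQ
      obtain ⟨l, hl⟩ := hb'
      exact ⟨-t * l - k * a, by linear_combination (-t) * hl⟩

/-- If a real monic quadratic has nonpositive discriminant, conjugation exchanges its roots
(a double root being real). -/
theorem conj_eq_other_root (t Q : ℤ) (hd : t ^ 2 ≤ 4 * Q) (β : ℂ)
    (hβ : β ^ 2 + (t : ℂ) * β + (Q : ℂ) = 0) :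
    (starRingEnd ℂ) β = -(t : ℂ) - β := by
  have hd' : (t : ℝ) ^ 2 ≤ 4 * (Q : ℝ) := by exact_mod_cast hd
  have hre := congrArg Complex.re hβ
  have him := congrArg Complex.im hβ
  simp [pow_two] at hre him
  have key : 2 * β.re + t = 0 := by
    have h : β.im * (2 * β.re + t) = 0 := by linear_combination him
    rcases mul_eq_zero.mp h with h | h
    · rw [h] at hre
      have : (2 * β.re + t) ^ 2 ≤ 0 := by nlinarith
      exact pow_eq_zero_iff two_ne_zero |>.mp (le_antisymm this (sq_nonneg _))
    · exact h
  apply Complex.ext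
  · simp
    linarith
  · simp

/-- No power of an ordinary Frobenius root is rational: if `q` is prime, `f ≥ 1`,
`t ∈ ℤ` with `gcd(t, q) = 1` and `t² ≤ 4q^f`, and `β ∈ ℂ` is a root of
`x² + t x + q^f`, then for every `n ≥ 1` the power `β^n` is not rational. -/
theorem ordinary_frobenius_root_pow_not_rational
    (q : ℕ) (hq : q.Prime) (f : ℕ) (hf : 1 ≤ f)
    (t : ℤ) (ht : Int.gcd t (q : ℤ) = 1) (ht2 : t ^ 2 ≤ 4 * (q : ℤ) ^ f)
    (β : ℂ) (hβ : β ^ 2 + (t : ℂ) * β + (q : ℂ) ^ f = 0) :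
    ∀ n : ℕ, 1 ≤ n → ¬ ∃ r : ℚ, β ^ n = (r : ℂ) := by
  rintro n hn ⟨r, hr⟩
  have hqp : Prime (q : ℤ) := Nat.prime_iff_prime_int.mp hq
  have hqQ : (q : ℤ) ∣ (q : ℤ) ^ f := dvd_pow_self _ (by omega)
  have hconj := conj_eq_other_root t ((q : ℤ) ^ f) ht2 β (by push_cast; exact hβ)
  have hprod : β * (-(t : ℂ) - β) = (((q : ℤ) ^ f : ℤ) : ℂ) := by
    push_cast
    linear_combination -hβ
  have hpow : (-(t : ℂ) - β) ^ n = β ^ n := by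
    rw [← hconj, ← map_pow, hr, map_ratCast]
  obtain ⟨m, rfl⟩ : ∃ m, n = m + 1 := ⟨n - 1, by omega⟩
  obtain ⟨s, -, hs, -, hdvd, -⟩ := exists_int_powerSum t ((q : ℤ) ^ f) q hqQ β (-(t : ℂ) - β)
    (by ring) hprod m
  have hsq : s ^ 2 = 4 * ((q : ℤ) ^ f) ^ (m + 1) := by
    have h : (s : ℂ) ^ 2 = 4 * (((q : ℤ) ^ f : ℤ) : ℂ) ^ (m + 1) := by
      rw [← hprod, mul_pow, ← hs, hpow]
      ring
    exact_mod_cast h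
  have hqs : (q : ℤ) ∣ s := by
    apply hqp.dvd_of_dvd_pow (n := 2)
    rw [hsq]
    exact Dvd.dvd.mul_left (hqQ.trans (dvd_pow_self _ (by omega))) _
  have hqt : (q : ℤ) ∣ t :=
    (dvd_neg).mp (hqp.dvd_of_dvd_pow ((dvd_sub_right hqs).mp hdvd))
  have h1 : (q : ℤ) ∣ ((Int.gcd t (q : ℤ) : ℕ) : ℤ) := Int.dvd_coe_gcd hqt dvd_rfl
  rw [ht] at h1
  exact hqp.not_isUnit (isUnit_of_dvd_one (by exact_mod_cast h1))
end

section
/- Let k be a totally real number field and ε = (a_σ)_σ a k-isogeny signature such that α^ε = 1 for every unit α ∈ 𝒪_k^×. Then all the integers a_σ are the same. -/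
/-!
Let `σ₀` be an embedding at which `a` is minimal. Minkowski's theorem, in the form of the lemma
`exists_unit` behind Dirichlet's unit theorem, gives a unit `u` with `log |σ u| < 0` for every
`σ ≠ σ₀`; this uses that `k` is totally real, so that distinct embeddings give distinct
infinite places. As `u` has norm `±1`, `∑ log |σ u| = 0`, while the hypothesis on `u` gives
`∑ a_σ log |σ u| = 0`. Hence `∑ (a_σ - a_σ₀) log |σ u| = 0` is a vanishing sum of nonpositive
terms, so each term is zero and `a_σ = a_σ₀` for all `σ`.
-/

open NumberField

/-- The product formula for units, indexed by embeddings rather than by infinite places. -/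
lemma sum_log_norm_embedding_unit (k : Type*) [Field k] [NumberField k] (u : (𝓞 k)ˣ) :
    ∑ σ : k →+* ℂ, Real.log ‖σ ((u : 𝓞 k) : k)‖ = 0 := by
  have hne : ∀ σ : k →+* ℂ, σ ((u : 𝓞 k) : k) ≠ 0 := fun σ => by simp
  have h1 : ∏ σ : k →+* ℂ, ‖σ ((u : 𝓞 k) : k)‖ = 1 := by
    have h2 := Algebra.norm_eq_prod_embeddings ℚ ℂ ((u : 𝓞 k) : k)
    have h3 : |Algebra.norm ℚ ((u : 𝓞 k) : k)| = 1 := NumberField.isUnit_iff_norm.mp u.isUnit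
    rw [Fintype.prod_equiv (RingHom.equivRatAlgHom k ℂ) (fun σ : k →+* ℂ => ‖σ ((u : 𝓞 k) : k)‖)
      (fun f => ‖f ((u : 𝓞 k) : k)‖) (fun _ => by simp [RingHom.equivRatAlgHom_apply]),
      ← norm_prod, ← h2]
    rw [eq_ratCast, Complex.norm_ratCast]
    exact_mod_cast h3
  rw [← Real.log_prod (fun σ _ => norm_ne_zero_iff.mpr (hne σ)), h1, Real.log_one]

/-- Let `k` be a totally real number field and `ε = (a_σ)_σ` a `k`-isogeny signature
(each `a_σ ∈ {0,4,6,8,12}`, indexed by the embeddings `σ : k → ℂ`) such that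
`α^ε = ∏_σ σ(α)^(a_σ) = 1` for every unit `α ∈ 𝒪_k^×`.  Then all the integers `a_σ`
are the same. -/
theorem signature_constant_of_trivial_on_units_totally_real
    (k : Type*) [Field k] [NumberField k]
    (htr : ∀ φ : k →+* ℂ, NumberField.ComplexEmbedding.IsReal φ)
    (a : (k →+* ℂ) → ℕ) (ha : ∀ σ, a σ ∈ ({0, 4, 6, 8, 12} : Set ℕ))
    (hunits : ∀ α : (𝓞 k)ˣ, ∏ σ : k →+* ℂ, σ (((α : 𝓞 k) : k)) ^ a σ = 1) :
    ∀ σ τ : k →+* ℂ, a σ = a τ := by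
  obtain ⟨σ₀, hmin⟩ := Finite.exists_min a
  obtain ⟨u, hu⟩ := Units.dirichletUnitTheorem.exists_unit k (InfinitePlace.mk σ₀)
  have hlog : ∀ σ : k →+* ℂ, σ ≠ σ₀ → Real.log ‖σ ((u : 𝓞 k) : k)‖ < 0 := by
    intro σ hσ
    refine hu (InfinitePlace.mk σ) fun h => hσ ?_
    rcases InfinitePlace.mk_eq_iff.mp h with h | h
    · exact h
    · exact (ComplexEmbedding.isReal_iff.mp (htr σ)).symm.trans h
  have hsum : ∑ σ : k →+* ℂ, (a σ : ℝ) * Real.log ‖σ ((u : 𝓞 k) : k)‖ = 0 := by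
    have h := congrArg (fun z : ℂ => Real.log ‖z‖) (hunits u)
    simp only [norm_prod, norm_pow, norm_one, Real.log_one] at h
    rw [Real.log_prod (fun σ _ => pow_ne_zero _ (norm_ne_zero_iff.mpr (by simp)))] at h
    simpa only [Real.log_pow] using h
  have hdiff : ∑ σ : k →+* ℂ, ((a σ : ℝ) - a σ₀) * Real.log ‖σ ((u : 𝓞 k) : k)‖ = 0 := by
    simp only [sub_mul, Finset.sum_sub_distrib, ← Finset.mul_sum, hsum,
      sum_log_norm_embedding_unit, mul_zero, sub_zero]
  have hterm : ∀ σ ∈ Finset.univ,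
      ((a σ : ℝ) - a σ₀) * Real.log ‖σ ((u : 𝓞 k) : k)‖ ≤ 0 := by
    intro σ _
    by_cases hσ : σ = σ₀
    · simp [hσ]
    · exact mul_nonpos_of_nonneg_of_nonpos
        (sub_nonneg.mpr (Nat.cast_le.mpr (hmin σ))) (hlog σ hσ).le
  have hzero := (Finset.sum_eq_zero_iff_of_nonpos hterm).mp hdiff
  have hconst : ∀ σ, a σ = a σ₀ := by
    intro σ
    by_cases hσ : σ = σ₀
    · rw [hσ]
    · rcases mul_eq_zero.mp (hzero σ (Finset.mem_univ σ)) with h | h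
      · exact_mod_cast sub_eq_zero.mp h
      · exact absurd h (hlog σ hσ).ne
  intro σ τ
  rw [hconst σ, hconst τ]
end

section
/- Let k be a number field containing an imaginary quadratic field L, let p be a rational prime that ramifies in L, and let 𝔭_L be the unique prime of 𝒪_L above p. Then for every α ∈ 𝒪_k whose ideal is coprime to p, one has Nm_{k/L}(α)^12 ≡ Nm_{k/ℚ}(α)^6 (mod 𝔭_L), where the integer Nm_{k/ℚ}(α)^6 is viewed in 𝒪_L. -/
open NumberField

/-!
Ramification makes `𝓞 L ⧸ 𝔭` the prime field `𝔽_p` and makes `Gal(L/ℚ)` act trivially on it.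
With `a = Nm_{k/L}(α)`, transitivity of norms gives `Nm_{k/ℚ}(α) = ∏ σ(a)`, a product of two
factors each congruent to `a` modulo `𝔭`. Hence `Nm_{k/ℚ}(α) ≡ a²`, and the sixth power of this
congruence is the claim.
-/

/-- The residue field at a prime whose square is `p` has `p` elements, so every class contains a
rational integer. -/
lemma exists_int_sub_mem_of_ramified
    (L : Type*) [Field L] [NumberField L]
    (hdeg : Module.finrank ℚ L = 2)
    (p : ℕ) (hp : p.Prime) (𝔭 : Ideal (𝓞 L))
    (hram : Ideal.span {(p : 𝓞 L)} = 𝔭 ^ 2) (a : 𝓞 L) :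
    ∃ n : ℤ, a - (n : 𝓞 L) ∈ 𝔭 := by
  have hnorm : Ideal.absNorm 𝔭 = p := by
    have h := congrArg Ideal.absNorm hram
    rw [map_pow, Ideal.absNorm_span_singleton, ← Int.cast_natCast, ← eq_intCast (algebraMap ℤ (𝓞 L)),
      Algebra.norm_algebraMap, RingOfIntegers.rank, hdeg, Int.natAbs_pow, Int.natAbs_natCast] at h
    exact (Nat.pow_left_injective (n := 2) two_ne_zero h).symm
  have hcard : Nat.card (𝓞 L ⧸ 𝔭) = p := hnorm
  have : Fact p.Prime := ⟨hp⟩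
  have hne : (1 : 𝓞 L ⧸ 𝔭) ≠ 0 := by
    intro h
    have : Subsingleton (𝓞 L ⧸ 𝔭) := subsingleton_of_zero_eq_one h.symm
    have h1 : Nat.card (𝓞 L ⧸ 𝔭) = 1 := Nat.card_eq_one_iff_unique.2 ⟨this, ⟨0⟩⟩
    exact hp.one_lt.ne' (hcard.symm.trans h1)
  -- The additive group of the residue ring has prime order, so `1` generates it.
  obtain ⟨n, hn⟩ := AddSubgroup.mem_zmultiples_iff.1
    (mem_zmultiples_of_prime_card hcard hne (g' := Ideal.Quotient.mk 𝔭 a))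
  refine ⟨n, Ideal.Quotient.eq.1 ?_⟩
  rw [← hn]
  simp

/-- Every ring endomorphism of `𝓞 L` preserves a prime whose square is generated by an integer. -/
lemma map_mem_of_ramified {R : Type*} [CommRing R] (p : ℕ) (𝔭 : Ideal R) (h𝔭prime : 𝔭.IsPrime)
    (hram : Ideal.span {(p : R)} = 𝔭 ^ 2) (σ : R →+* R) {y : R} (hy : y ∈ 𝔭) : σ y ∈ 𝔭 := by
  have hy2 : y ^ 2 ∈ Ideal.span {(p : R)} := hram ▸ Ideal.pow_mem_pow hy 2
  obtain ⟨z, hz⟩ := Ideal.mem_span_singleton'.1 hy2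
  have hp𝔭 : (p : R) ∈ 𝔭 := Ideal.pow_le_self two_ne_zero
    (hram ▸ Ideal.mem_span_singleton_self (p : R))
  refine h𝔭prime.mem_of_pow_mem 2 ?_
  rw [← map_pow, ← hz, map_mul, map_natCast]
  exact 𝔭.mul_mem_left _ hp𝔭

lemma norm_sub_sq_mem_of_ramified
    (L : Type*) [Field L] [NumberField L]
    (hdeg : Module.finrank ℚ L = 2)
    (p : ℕ) (hp : p.Prime) (𝔭 : Ideal (𝓞 L)) (h𝔭prime : 𝔭.IsPrime)
    (hram : Ideal.span {(p : 𝓞 L)} = 𝔭 ^ 2) (a : 𝓞 L) :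
    ((Algebra.norm ℤ a : ℤ) : 𝓞 L) - a ^ 2 ∈ 𝔭 := by
  obtain ⟨n, hn⟩ := exists_int_sub_mem_of_ramified L hdeg p hp 𝔭 hram a
  have : Algebra.IsQuadraticExtension ℚ L := ⟨hdeg⟩
  have : IsGalois ℚ L := {}
  have hprod : ((Algebra.norm ℤ a : ℤ) : 𝓞 L) = ∏ σ : Gal(L/ℚ), galRestrict ℤ ℚ L (𝓞 L) σ a := by
    rw [prod_galRestrict_eq_norm, ← eq_intCast (algebraMap ℤ (𝓞 L))]
    congr 1
    apply IsFractionRing.injective ℤ ℚ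
    rw [IsIntegralClosure.algebraMap_mk']
    exact (Algebra.norm_localization ℤ (nonZeroDivisors ℤ) a).symm
  have hσ (σ : Gal(L/ℚ)) :
      Ideal.Quotient.mk 𝔭 (galRestrict ℤ ℚ L (𝓞 L) σ a) = Ideal.Quotient.mk 𝔭 a := by
    rw [Ideal.Quotient.eq.2 hn, Ideal.Quotient.eq]
    simpa using map_mem_of_ramified p 𝔭 h𝔭prime hram
      (galRestrict ℤ ℚ L (𝓞 L) σ : 𝓞 L →+* 𝓞 L) hn
  rw [← Ideal.Quotient.eq, hprod, map_prod, Finset.prod_congr rfl fun σ _ => hσ σ,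
    Finset.prod_const, Finset.card_univ, ← Nat.card_eq_fintype_card, IsGalois.card_aut_eq_finrank,
    hdeg, map_pow]

/-- Let `k` be a number field containing an imaginary quadratic field `L`, let `p` be a
rational prime that ramifies in `L` with `p𝒪_L = 𝔭_L²`, and let `𝔭_L` be the unique
prime of `𝒪_L` above `p`.  Then for every `α ∈ 𝒪_k` whose ideal is coprime to `p`,
`Nm_{k/L}(α)^12 ≡ Nm_{k/ℚ}(α)^6 (mod 𝔭_L)`, where the integer `Nm_{k/ℚ}(α)^6` is
viewed in `𝒪_L`. -/
theorem relNorm_pow_twelve_cong_absNorm_pow_six_of_ramified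
    (L k : Type*) [Field L] [NumberField L] [Field k] [NumberField k]
    [Algebra L k]
    (hdeg : Module.finrank ℚ L = 2)
    (himag : ∀ φ : L →+* ℂ, ¬ NumberField.ComplexEmbedding.IsReal φ)
    (p : ℕ) (hp : p.Prime)
    (𝔭 : Ideal (𝓞 L)) (h𝔭prime : 𝔭.IsPrime)
    (hram : Ideal.span {(p : 𝓞 L)} = 𝔭 ^ 2)
    (α : 𝓞 k)
    (hcop : IsCoprime (Ideal.span {α}) (Ideal.span {(p : 𝓞 k)})) :
    (Algebra.intNorm (𝓞 L) (𝓞 k) α) ^ 12 - ((Algebra.norm ℤ α : ℤ) : 𝓞 L) ^ 6 ∈ 𝔭 := by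
  have htower : Algebra.norm ℤ α = Algebra.norm ℤ (Algebra.intNorm (𝓞 L) (𝓞 k) α) := by
    rw [← Algebra.intNorm_eq_norm, ← Algebra.intNorm_eq_norm, Algebra.intNorm_intNorm]
  have h := norm_sub_sq_mem_of_ramified L hdeg p hp 𝔭 h𝔭prime hram
    (Algebra.intNorm (𝓞 L) (𝓞 k) α)
  rw [← htower, ← Ideal.Quotient.eq] at h
  rw [← Ideal.Quotient.eq, map_pow (Ideal.Quotient.mk 𝔭) (Int.cast _), h]
  simp only [map_pow]
  ring
end

section
/- Let k be a number field containing an imaginary quadratic field L, let 𝔮 be a nonzero prime ideal of 𝒪_k, let h be the order of the class of 𝔮 in the class group of k, and let γ ∈ 𝒪_k be a generator of the principal ideal 𝔮^h. Then Nm_{k/L}(γ)^12 ≠ 1 and Nm_{k/L}(γ)^12 ≠ N(𝔮)^{12h}. -/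
open NumberField
open scoped nonZeroDivisors

/-!
Taking absolute norms turns both inequalities into inequalities between powers of the integer
`Q = N(𝔮)`, which is at least `2`. By transitivity of norms `|Nm_{L/ℚ}(Nm_{k/L} γ)| = Q ^ h`, so
`Nm_{k/L}(γ) ^ 12` has absolute norm `Q ^ (12 h)`. On the other hand `1` has absolute norm `1`, and
`Q ^ (12 h) ∈ ℤ` has absolute norm `Q ^ (24 h)` because `[L : ℚ] = 2`. These three powers of `Q` are
distinct, as `h > 0` by finiteness of the class group.
-/

lemma natAbs_norm_intNorm (L k : Type*) [Field L] [NumberField L] [Field k] [NumberField k]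
    [Algebra L k] (γ : 𝓞 k) :
    (Algebra.norm ℤ (Algebra.intNorm (𝓞 L) (𝓞 k) γ)).natAbs = (Algebra.norm ℤ γ).natAbs := by
  congr 1
  have hQ : ((Algebra.norm ℤ (Algebra.intNorm (𝓞 L) (𝓞 k) γ) : ℤ) : ℚ) =
      (Algebra.norm ℤ γ : ℤ) := by
    rw [Algebra.coe_norm_int, Algebra.coe_norm_int, ← Algebra.norm_norm (R := ℚ) (S := L) (a := (γ : k))]
    congr 1
    exact Algebra.algebraMap_intNorm (A := 𝓞 L) (K := L) (L := k) (B := 𝓞 k) γ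
  exact_mod_cast hQ

/-- Let `k` be a number field containing an imaginary quadratic field `L`, let `𝔮` be a
nonzero prime ideal of `𝒪_k`, let `h` be the order of the class of `𝔮` in the class
group of `k`, and let `γ ∈ 𝒪_k` generate the principal ideal `𝔮^h`.  Then
`Nm_{k/L}(γ)^12 ≠ 1` and `Nm_{k/L}(γ)^12 ≠ N(𝔮)^(12h)`. -/
theorem relNorm_gamma_pow_twelve_ne_one_and_ne_norm_pow
    (L k : Type*) [Field L] [NumberField L] [Field k] [NumberField k]
    [Algebra L k]
    (hdeg : Module.finrank ℚ L = 2)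
    (himag : ∀ φ : L →+* ℂ, ¬ NumberField.ComplexEmbedding.IsReal φ)
    (𝔮 : Ideal (𝓞 k)) (h𝔮prime : 𝔮.IsPrime) (h𝔮ne : 𝔮 ≠ ⊥)
    (h : ℕ)
    (hord : h = orderOf (ClassGroup.mk0
      (⟨𝔮, mem_nonZeroDivisors_of_ne_zero h𝔮ne⟩ : (Ideal (𝓞 k))⁰)))
    (γ : 𝓞 k) (hγ : Ideal.span {γ} = 𝔮 ^ h) :
    (Algebra.intNorm (𝓞 L) (𝓞 k) γ) ^ 12 ≠ 1 ∧
    (Algebra.intNorm (𝓞 L) (𝓞 k) γ) ^ 12 ≠ (Ideal.absNorm 𝔮 : 𝓞 L) ^ (12 * h) := by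
  have hpos : 0 < h := hord ▸ orderOf_pos _
  have hQ : 1 < Ideal.absNorm 𝔮 := by
    have h0 : Ideal.absNorm 𝔮 ≠ 0 := by simpa [Ideal.absNorm_eq_zero_iff] using h𝔮ne
    have h1 : Ideal.absNorm 𝔮 ≠ 1 := by simpa [Ideal.absNorm_eq_one_iff] using h𝔮prime.ne_top
    omega
  have hN : (Algebra.norm ℤ (Algebra.intNorm (𝓞 L) (𝓞 k) γ)).natAbs = Ideal.absNorm 𝔮 ^ h := by
    rw [natAbs_norm_intNorm, ← Ideal.absNorm_span_singleton, hγ, map_pow]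
  have hrank : Module.finrank ℤ (𝓞 L) = 2 := by rw [RingOfIntegers.rank, hdeg]
  refine ⟨fun H => ?_, fun H => ?_⟩
  · have H' := congrArg (fun x => (Algebra.norm ℤ x).natAbs) H
    simp only [map_pow, map_one, Int.natAbs_pow, hN, Int.natAbs_one, ← pow_mul] at H'
    exact (Nat.one_lt_pow (by omega) hQ).ne' H'
  · have H' := congrArg (fun x => (Algebra.norm ℤ x).natAbs) H
    have hc : Algebra.norm ℤ ((Ideal.absNorm 𝔮 : ℕ) : 𝓞 L) = (Ideal.absNorm 𝔮 : ℤ) ^ 2 := by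
      have := Algebra.norm_algebraMap_of_basis (RingOfIntegers.basis L) (Ideal.absNorm 𝔮 : ℤ)
      rwa [← Module.finrank_eq_card_basis (RingOfIntegers.basis L), hrank, map_natCast] at this
    simp only [map_pow, hc, Int.natAbs_pow, hN, Int.natAbs_natCast, ← pow_mul] at H'
    have := Nat.pow_right_injective hQ H'
    omega
end
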